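/- arXiv:1810.03164 — 2 statements merged into one kernel-verified Lean document; each statement's English description precedes it below -/
import Mathlib

section
/- Let q be a complex number, let s be a positive integer, let n be a nonnegative integer, and let x_1,…,x_s and y_1,…,y_s be complex numbers such that q^j y_i ≠ 1 for every i and every integer j with 1 ≤ j ≤ n. Then ∑_{k=0}^{n} [(x_1;q)_k ⋯ (x_s;q)_k / ((qy_1;q)_k ⋯ (qy_s;q)_k)] · {∏_{i=1}^{s}(1 - q^k x_i) - ∏_{i=1}^{s}(1 - q^k y_i)} = (x_1;q)_{n+1} ⋯ (x_s;q)_{n+1} / ((qy_1;q)_n ⋯ (qy_s;q)_n) - ∏_{i=1}^{s}(1 - y_i). -/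
/-! The sum telescopes. Put `T k = ∏ (x_i;q)_k / ∏ (q y_i;q)_{k-1}` for `k ≥ 1` and
`T 0 = ∏ (1 - y_i)`; then the `k`-th summand is `T (k+1) - T k`. Indeed the factors `1 - q^k x_i`
extend the numerator, and for `k ≥ 1` the factors `1 - q^k y_i`, nonzero by hypothesis, cancel the
last factors of the denominator; at `k = 0` there is nothing to cancel, and they form the boundary
term `T 0`. The one-step extension of the products is `prod_qPoch_succ`. -/

/-- The finite q-shifted factorial `(x;q)_n = ∏_{i=0}^{n-1} (1 - x q^i)`. -/
noncomputable def qPoch (x q : ℂ) (n : ℕ) : ℂ := ∏ i ∈ Finset.range n, (1 - x * q ^ i)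

/-- The infinite q-shifted factorial `(x;q)_∞ = ∏_{i=0}^{∞} (1 - x q^i)`. -/
noncomputable def qPochInf (x q : ℂ) : ℂ := ∏' i : ℕ, (1 - x * q ^ i)

lemma prod_qPoch_succ {s : ℕ} (x : Fin s → ℂ) (q : ℂ) (n : ℕ) :
    ∏ i, qPoch (x i) q (n + 1) = (∏ i, qPoch (x i) q n) * ∏ i, (1 - q ^ n * x i) := by
  rw [← Finset.prod_mul_distrib]
  refine Finset.prod_congr rfl fun i _ => ?_
  rw [qPoch, Finset.prod_range_succ, mul_comm (q ^ n), qPoch]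

theorem stmt_6 (q : ℂ) (s : ℕ) (hs : 0 < s) (n : ℕ)
    (x y : Fin s → ℂ) (hy : ∀ i, ∀ j : ℕ, 1 ≤ j → j ≤ n → q ^ j * y i ≠ 1) :
    ∑ k ∈ Finset.range (n + 1),
      (∏ i, qPoch (x i) q k) / (∏ i, qPoch (q * y i) q k) *
        ((∏ i, (1 - q ^ k * x i)) - ∏ i, (1 - q ^ k * y i)) =
    (∏ i, qPoch (x i) q (n + 1)) / (∏ i, qPoch (q * y i) q n) - ∏ i, (1 - y i) := by
  induction n with
  | zero => simp [qPoch]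
  | succ n ih =>
    have hB : ∏ i, (1 - q ^ (n + 1) * y i) ≠ 0 :=
      Finset.prod_ne_zero_iff.mpr fun i _ =>
        sub_ne_zero.mpr (hy i (n + 1) (by omega) le_rfl).symm
    have hQ : ∏ i, qPoch (q * y i) q (n + 1) =
        (∏ i, qPoch (q * y i) q n) * ∏ i, (1 - q ^ (n + 1) * y i) := by
      rw [prod_qPoch_succ (fun i => q * y i)]
      simp only [pow_succ, mul_assoc]
    rw [Finset.sum_range_succ, ih fun i j h1 h2 => hy i j h1 (by omega),
      prod_qPoch_succ x q (n + 1), hQ, mul_sub, div_mul_eq_mul_div, div_mul_eq_mul_div,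
      mul_div_mul_right _ _ hB]
    ring
end

section
/- Let m be a positive integer and let x_1,…,x_m be complex numbers. Then the series ∑_{k=0}^{∞} [∏_{i=1}^{m}(x_i)_k (1-x_i)_k / (k!^m (k+1)!^m)] · {∏_{i=1}^{m}(k + x_i)(k + 1 - x_i) - k^m (k+1)^m} converges and equals ∏_{i=1}^{m} sin(π x_i) / π^m. -/
/-!
The series telescopes. Put `u_x(n) = (x)_{n+1} (1-x)_{n+1} / (n! (n+1)!)`. With `U n = ∏ i, u_{x_i}(n)`,
the term of index `n + 1` is `U (n+1) - U n`, and the term of index `0` is `U 0` because `0 ^ m = 0`;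
hence the partial sums are the `U n`. Euler's product for the sine gives `u_x(n) → sin (π x) / π`
(`tendsto_quot`), which is the value claimed.

Since `HasSum` asks for unconditional convergence, the differences of `U` must also be absolutely
summable. For a single factor this follows from
`u_x(n+1) - u_x(n) = u_x(n) x (1-x) / ((n+1) (n+2))` and boundedness of `u_x`
(`summable_quot_sub`). Finite products of convergent sequences with absolutely summable differences
again have absolutely summable differences (`summable_prod_sub`).
-/

/-- The Pochhammer symbol `(x)_n = x (x+1) ⋯ (x+n-1)`. -/
noncomputable def poch (x : ℂ) (n : ℕ) : ℂ := ∏ i ∈ Finset.range n, (x + i)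

open Filter Topology

/-- The sequence `(x)_{n+1} (1-x)_{n+1} / (n! (n+1)!)`, which is one factor of the partial sum of the
series up to index `n`. -/
noncomputable def quot (x : ℂ) (n : ℕ) : ℂ :=
  poch x (n + 1) * poch (1 - x) (n + 1) / ((n.factorial : ℂ) * ((n + 1).factorial : ℂ))

lemma poch_succ (x : ℂ) (n : ℕ) : poch x (n + 1) = poch x n * (x + n) :=
  Finset.prod_range_succ _ _

lemma quot_succ (x : ℂ) (n : ℕ) :
    quot x (n + 1) = quot x n * (1 + x * (1 - x) / (((n : ℂ) + 1) * ((n : ℂ) + 2))) := by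
  have h0 : (n.factorial : ℂ) ≠ 0 := by exact_mod_cast n.factorial_ne_zero
  have h1 : (n : ℂ) + 1 ≠ 0 := by exact_mod_cast n.succ_ne_zero
  have h2 : (n : ℂ) + 2 ≠ 0 := by exact_mod_cast (n + 1).succ_ne_zero
  have h3 : (n : ℂ) + 1 + 1 ≠ 0 := by exact_mod_cast (n + 1).succ_ne_zero
  unfold quot
  rw [poch_succ x (n + 1), poch_succ (1 - x) (n + 1)]
  simp only [Nat.factorial_succ]
  push_cast
  field_simp
  ring

/-- The truncations of Euler's product for the sine, up to a factor tending to `1`. -/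
lemma quot_eq (x : ℂ) (n : ℕ) :
    quot x n = x * (∏ j ∈ Finset.range n, (1 - x ^ 2 / ((j : ℂ) + 1) ^ 2)) *
      (1 - x / ((n : ℂ) + 1)) := by
  induction n with
  | zero => simp [quot, poch]
  | succ n ih =>
    have h1 : (n : ℂ) + 1 ≠ 0 := by exact_mod_cast n.succ_ne_zero
    have h2 : (n : ℂ) + 2 ≠ 0 := by exact_mod_cast (n + 1).succ_ne_zero
    have h3 : (n : ℂ) + 1 + 1 ≠ 0 := by exact_mod_cast (n + 1).succ_ne_zero
    rw [quot_succ, ih, Finset.prod_range_succ]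
    push_cast
    field_simp
    ring

lemma tendsto_quot (x : ℂ) :
    Tendsto (quot x) atTop (𝓝 (Complex.sin (Real.pi * x) / Real.pi)) := by
  have hpi : (Real.pi : ℂ) ≠ 0 := by exact_mod_cast Real.pi_ne_zero
  have h1 := (Complex.tendsto_euler_sin_prod x).div_const (Real.pi : ℂ)
  have h2 : Tendsto (fun n : ℕ => 1 - x / ((n : ℂ) + 1)) atTop (𝓝 (1 - x * 0)) := by
    simp only [div_eq_mul_inv]
    refine tendsto_const_nhds.sub (tendsto_const_nhds.mul ?_)
    simpa [one_div] using tendsto_one_div_add_atTop_nhds_zero_nat (𝕜 := ℂ)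
  have h := h1.mul h2
  simp only [mul_zero, sub_zero, mul_one] at h
  refine h.congr fun n => ?_
  rw [quot_eq]
  field_simp

lemma exists_bound_of_tendsto {f : ℕ → ℂ} {a : ℂ} (h : Tendsto f atTop (𝓝 a)) :
    ∃ C : ℝ, ∀ n, ‖f n‖ ≤ C := by
  obtain ⟨C, hC⟩ := h.norm.bddAbove_range
  exact ⟨C, fun n => hC ⟨n, rfl⟩⟩

lemma summable_quot_sub (x : ℂ) : Summable fun n => ‖quot x (n + 1) - quot x n‖ := by
  obtain ⟨C, hC⟩ := exists_bound_of_tendsto (tendsto_quot x)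
  have hs : Summable fun n : ℕ => 1 / ((n : ℝ) + 1) ^ 2 := by
    have := (summable_nat_add_iff 1).2 (Real.summable_one_div_nat_pow.2 one_lt_two)
    simpa using this
  refine Summable.of_nonneg_of_le (fun _ => norm_nonneg _) (fun n => ?_)
    (hs.mul_left (C * ‖x * (1 - x)‖))
  have e : quot x (n + 1) - quot x n =
      quot x n * (x * (1 - x)) * (1 / (((n : ℂ) + 1) * ((n : ℂ) + 2))) := by
    rw [quot_succ]; ring
  have hn : ‖1 / (((n : ℂ) + 1) * ((n : ℂ) + 2))‖ = 1 / (((n : ℝ) + 1) * ((n : ℝ) + 2)) := by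
    have : 1 / (((n : ℂ) + 1) * ((n : ℂ) + 2)) =
        ((1 / (((n : ℝ) + 1) * ((n : ℝ) + 2)) : ℝ) : ℂ) := by push_cast; rfl
    rw [this, Complex.norm_real, Real.norm_of_nonneg (by positivity)]
  have hC0 : 0 ≤ C := (norm_nonneg _).trans (hC 0)
  rw [e, norm_mul, norm_mul, hn]
  gcongr
  · exact hC n
  · nlinarith

/-- A discrete Leibniz rule: absolute summability of differences passes to finite products of
convergent sequences. -/
lemma summable_prod_sub {ι : Type*} (s : Finset ι) (f : ι → ℕ → ℂ) (a : ι → ℂ)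
    (hf : ∀ i, Tendsto (f i) atTop (𝓝 (a i)))
    (hs : ∀ i, Summable fun n => ‖f i (n + 1) - f i n‖) :
    Summable fun n => ‖∏ i ∈ s, f i (n + 1) - ∏ i ∈ s, f i n‖ := by
  classical
  induction s using Finset.induction_on with
  | empty => simp
  | insert j s hj ih =>
    obtain ⟨C, hC⟩ := exists_bound_of_tendsto (hf j)
    obtain ⟨D, hD⟩ := exists_bound_of_tendsto (tendsto_finsetProd s fun i _ => hf i)
    refine Summable.of_nonneg_of_le (fun _ => norm_nonneg _) (fun n => ?_)
      ((ih.mul_left C).add ((hs j).mul_right D))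
    rw [Finset.prod_insert hj, Finset.prod_insert hj]
    have e : f j (n + 1) * ∏ i ∈ s, f i (n + 1) - f j n * ∏ i ∈ s, f i n =
        f j (n + 1) * (∏ i ∈ s, f i (n + 1) - ∏ i ∈ s, f i n) +
          (f j (n + 1) - f j n) * ∏ i ∈ s, f i n := by ring
    rw [e]
    refine (norm_add_le _ _).trans ?_
    rw [norm_mul, norm_mul]
    gcongr
    · exact hC _
    · exact hD _

theorem stmt_8 (m : ℕ) (hm : 0 < m) (x : Fin m → ℂ) :
    HasSum (fun k : ℕ =>
      (∏ i, poch (x i) k * poch (1 - x i) k) /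
        ((k.factorial : ℂ) ^ m * ((k + 1).factorial : ℂ) ^ m) *
        ((∏ i, ((k : ℂ) + x i) * ((k : ℂ) + 1 - x i)) - (k : ℂ) ^ m * ((k : ℂ) + 1) ^ m))
      ((∏ i, Complex.sin (Real.pi * x i)) / (Real.pi : ℂ) ^ m) := by
  set F : ℕ → ℂ := fun k : ℕ =>
      (∏ i, poch (x i) k * poch (1 - x i) k) /
        ((k.factorial : ℂ) ^ m * ((k + 1).factorial : ℂ) ^ m) *
        ((∏ i, ((k : ℂ) + x i) * ((k : ℂ) + 1 - x i)) - (k : ℂ) ^ m * ((k : ℂ) + 1) ^ m) with hF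
  have key : ∀ k, F k = ∏ i, quot (x i) k -
      (∏ i, poch (x i) k * poch (1 - x i) k) /
        ((k.factorial : ℂ) ^ m * ((k + 1).factorial : ℂ) ^ m) *
        ((k : ℂ) ^ m * ((k : ℂ) + 1) ^ m) := by
    intro k
    have e : ∏ i, quot (x i) k = (∏ i, poch (x i) k * poch (1 - x i) k) /
        ((k.factorial : ℂ) ^ m * ((k + 1).factorial : ℂ) ^ m) *
        (∏ i, ((k : ℂ) + x i) * ((k : ℂ) + 1 - x i)) := by
      rw [div_mul_eq_mul_div, ← Finset.prod_mul_distrib, ← mul_pow]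
      unfold quot
      rw [Finset.prod_div_distrib, Finset.prod_const, Finset.card_univ, Fintype.card_fin]
      congr 1
      refine Finset.prod_congr rfl fun i _ => ?_
      rw [poch_succ, poch_succ]
      ring
    rw [e, hF]
    ring
  have key0 : F 0 = ∏ i, quot (x i) 0 := by
    rw [key]; simp [hm.ne']
  -- The subtracted term is the previous partial sum: `k ^ m (k+1) ^ m` lowers each factorial by one.
  have keyS : ∀ n, F (n + 1) = ∏ i, quot (x i) (n + 1) - ∏ i, quot (x i) n := by
    intro n
    rw [key]
    congr 1
    have h0 : (n.factorial : ℂ) ≠ 0 := by exact_mod_cast n.factorial_ne_zero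
    have h1 : (n : ℂ) + 1 ≠ 0 := by exact_mod_cast n.succ_ne_zero
    have h3 : (n : ℂ) + 1 + 1 ≠ 0 := by exact_mod_cast (n + 1).succ_ne_zero
    unfold quot
    rw [Finset.prod_div_distrib, Finset.prod_const, Finset.card_univ, Fintype.card_fin,
      ← mul_pow, ← mul_pow, div_mul_eq_mul_div, mul_div_assoc, ← div_pow, div_eq_mul_inv _ (_ ^ m),
      ← inv_pow]
    congr 2
    simp only [Nat.factorial_succ]
    push_cast
    field_simp
  have hsum : Summable F := by
    refine (summable_nat_add_iff 1).1 (Summable.of_norm ?_)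
    simp only [keyS]
    exact summable_prod_sub _ _ _ (fun i => tendsto_quot (x i)) fun i => summable_quot_sub (x i)
  have partialSum : ∀ n, ∑ k ∈ Finset.range (n + 1), F k = ∏ i, quot (x i) n := by
    intro n
    induction n with
    | zero => simpa using key0
    | succ n ih => rw [Finset.sum_range_succ, ih, keyS]; ring
  rw [hsum.hasSum_iff_tendsto_nat, ← tendsto_add_atTop_iff_nat 1]
  simp only [partialSum]
  have h := tendsto_finsetProd Finset.univ fun i _ => tendsto_quot (x i)
  rwa [Finset.prod_div_distrib, Finset.prod_const, Finset.card_univ, Fintype.card_fin] at h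
end
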